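/- arXiv:2603.18162 — 9 statements merged into one kernel-verified Lean document; each statement's English description precedes it below -/
import Mathlib

section
/- Let d ≥ 1 and D ≥ 3 be integers and let A ⊆ ℕ^d be of smooth type for D. Then the d(D−2)-fold sumset of A is the full discrete simplex: d(D−2)·A = Δ_{d(D−2)}; that is, a point y ∈ ℕ^d can be written as a sum of exactly d(D−2) elements of A if and only if |y| ≤ d(D−2)·D. -/
open Pointwise

/-- The `s`-fold sumset of `A`: `0A = {0}` and `(s+1)A = A + sA`. -/
def sumset {M : Type*} [AddMonoid M] (A : Set M) : ℕ → Set M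
  | 0 => {0}
  | s + 1 => A + sumset A s

/-- `A ⊆ ℕ^d` is of smooth type for `D`: all elements have coordinate sum `≤ D`,
and `A` contains `0`, `εᵢ`, `(D-1)εᵢ` and `εᵢ + (D-1)εⱼ` for all `i, j`. -/
def SmoothType (d D : ℕ) (A : Set (Fin d → ℕ)) : Prop :=
  (∀ a ∈ A, ∑ j, a j ≤ D) ∧
  (0 : Fin d → ℕ) ∈ A ∧
  (∀ i : Fin d, Pi.single i 1 ∈ A) ∧
  (∀ i : Fin d, Pi.single i (D - 1) ∈ A) ∧
  (∀ i j : Fin d, Pi.single i 1 + Pi.single j (D - 1) ∈ A)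

/-!
Write `m = D - 1` and let `Δ k` be the set of vectors of coordinate sum at most `k`. Minkowski
sums of these simplices are simplices again, `Δ k + Δ l = Δ (k + l)`. Smooth type means
`Δ 1 + m · Δ 1 ⊆ A ⊆ Δ (m + 1)`, so taking `s`-fold sumsets gives
`Δ s + m · Δ s ⊆ s A ⊆ Δ (s (m + 1))`. It remains to write each `y ∈ Δ (s (m + 1))` as `x + m z`
with `x, z ∈ Δ s`. Take `z` below the vector `q` of quotients `y i / m`, with coordinate sum
`min s |q|`: if `|z| = s`, then `|x| ≤ s` because `|y| ≤ s (m + 1)`; if `|z| = |q|`, then `x`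
consists of remainders modulo `m`, and `|x| ≤ d (m - 1) ≤ s`.
-/

theorem sumset_eq_nsmul {M : Type*} [AddMonoid M] (A : Set M) (n : ℕ) : sumset A n = n • A := by
  induction n with
  | zero => rw [sumset, zero_nsmul, Set.singleton_zero]
  | succ n ih => rw [sumset, ih, succ_nsmul']

section Simplex

variable {ι : Type*} [Fintype ι]

theorem exists_le_sum_eq {f : ι → ℕ} {n : ℕ} (hn : n ≤ ∑ i, f i) : ∃ g ≤ f, ∑ i, g i = n := by
  obtain ⟨g, hgf, hg⟩ := Finsupp.exists_le_degree_eq (Finsupp.equivFunOnFinite.symm f) n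
    (by simpa [Finsupp.degree_eq_sum] using hn)
  exact ⟨g, hgf, by rw [← hg, Finsupp.degree_eq_sum]⟩

theorem sum_le_mul_sum_div_add (y : ι → ℕ) {m : ℕ} (hm : 0 < m) :
    ∑ i, y i ≤ m * ∑ i, y i / m + Fintype.card ι * (m - 1) := by
  calc ∑ i, y i = m * ∑ i, y i / m + ∑ i, y i % m := by
        simp only [Finset.mul_sum, ← Finset.sum_add_distrib, Nat.div_add_mod]
    _ ≤ m * ∑ i, y i / m + Fintype.card ι * (m - 1) := by
        gcongr
        exact Finset.sum_le_card_nsmul _ _ _ fun i _ ↦ Nat.le_sub_one_of_lt (Nat.mod_lt _ hm)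

variable (ι) in
/-- The discrete simplex of size `n`: the vectors in `ℕ^ι` of coordinate sum at most `n`. The set
`Δ_s` of the paper is `discreteSimplex (Fin d) (s * D)`. -/
def discreteSimplex (n : ℕ) : Set (ι → ℕ) := {x | ∑ i, x i ≤ n}

namespace discreteSimplex

theorem mem_iff {n : ℕ} {x : ι → ℕ} : x ∈ discreteSimplex ι n ↔ ∑ i, x i ≤ n := Iff.rfl

theorem zero_eq : discreteSimplex ι 0 = 0 := by
  ext x
  simp [mem_iff, funext_iff]

theorem mem_one_iff [DecidableEq ι] {x : ι → ℕ} :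
    x ∈ discreteSimplex ι 1 ↔ x = 0 ∨ ∃ i, x = Pi.single i 1 := by
  have sum_eq_one_iff : ∑ i, x i = 1 ↔ ∃ i, x = Pi.single i 1 := by
    simpa [Finsupp.sum_fintype, Equiv.symm_apply_eq] using
      Finsupp.sum_eq_one_iff (Finsupp.equivFunOnFinite.symm x)
  rw [mem_iff, Nat.le_one_iff_eq_zero_or_eq_one, sum_eq_one_iff]
  simp [funext_iff]

theorem add_eq (k l : ℕ) :
    discreteSimplex ι k + discreteSimplex ι l = discreteSimplex ι (k + l) := by
  refine subset_antisymm ?_ fun x hx ↦ ?_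
  · rintro _ ⟨x, hx, y, hy, rfl⟩
    simpa only [mem_iff, Pi.add_apply, Finset.sum_add_distrib] using add_le_add hx hy
  · obtain ⟨y, hyx, hy⟩ := exists_le_sum_eq (min_le_right k (∑ i, x i))
    obtain ⟨z, rfl⟩ := exists_add_of_le hyx
    simp only [mem_iff, Pi.add_apply, Finset.sum_add_distrib] at hx hy
    exact Set.add_mem_add (mem_iff.mpr (by omega)) (mem_iff.mpr (by omega))

theorem nsmul_eq (n k : ℕ) : n • discreteSimplex ι k = discreteSimplex ι (n * k) := by
  induction n with
  | zero => rw [zero_nsmul, zero_mul, zero_eq]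
  | succ n ih => rw [succ_nsmul, ih, add_eq, Nat.succ_mul]

-- For a set `S`, `m • S` is the `m`-fold sumset; the dilate of `S` by `m` is an image instead.
theorem subset_add_image_nsmul {m s : ℕ} (hm : 0 < m) (hs : Fintype.card ι * (m - 1) ≤ s) :
    discreteSimplex ι (s * (m + 1)) ⊆
      discreteSimplex ι s + nsmulAddMonoidHom m '' discreteSimplex ι s := by
  intro y hy
  obtain ⟨z, hzq, hz⟩ := exists_le_sum_eq (min_le_right s (∑ i, y i / m))
  have hzy : m • z ≤ y := fun i ↦ (Nat.mul_le_mul_left m (hzq i)).trans (Nat.mul_div_le _ _)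
  have hy_le : ∑ i, y i ≤ m * ∑ i, z i + s := by
    rcases min_choice s (∑ i, y i / m) with h | h <;> rw [hz, h]
    · exact hy.trans_eq (by ring)
    · exact (sum_le_mul_sum_div_add y hm).trans (by gcongr)
  obtain ⟨x, rfl⟩ := exists_add_of_le hzy
  have hx : x ∈ discreteSimplex ι s := by
    simpa [mem_iff, Finset.sum_add_distrib, ← Finset.mul_sum] using hy_le
  rw [add_comm (m • z)]
  exact Set.add_mem_add hx ⟨z, mem_iff.mpr (hz.trans_le (min_le_left _ _)), rfl⟩

end discreteSimplex

theorem nsmul_eq_discreteSimplex {A : Set (ι → ℕ)} {m s : ℕ} (hm : 0 < m)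
    (hs : Fintype.card ι * (m - 1) ≤ s) (hA_le : A ⊆ discreteSimplex ι (m + 1))
    (hA_ge : discreteSimplex ι 1 + nsmulAddMonoidHom m '' discreteSimplex ι 1 ⊆ A) :
    s • A = discreteSimplex ι (s * (m + 1)) := by
  refine subset_antisymm ?_ ?_
  · calc s • A ⊆ s • discreteSimplex ι (m + 1) := Set.nsmul_subset_nsmul_left hA_le
      _ = discreteSimplex ι (s * (m + 1)) := discreteSimplex.nsmul_eq s (m + 1)
  · calc discreteSimplex ι (s * (m + 1))
        ⊆ discreteSimplex ι s + nsmulAddMonoidHom m '' discreteSimplex ι s :=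
          discreteSimplex.subset_add_image_nsmul hm hs
      _ = s • (discreteSimplex ι 1 + nsmulAddMonoidHom m '' discreteSimplex ι 1) := by
          rw [nsmul_add, ← Set.image_nsmul, discreteSimplex.nsmul_eq, mul_one]
      _ ⊆ s • A := Set.nsmul_subset_nsmul_left hA_ge

end Simplex

namespace SmoothType

variable {d D : ℕ} {A : Set (Fin d → ℕ)}

theorem subset_discreteSimplex (hA : SmoothType d D A) : A ⊆ discreteSimplex (Fin d) D := hA.1

theorem add_image_nsmul_subset (hA : SmoothType d D A) :
    discreteSimplex (Fin d) 1 + nsmulAddMonoidHom (D - 1) '' discreteSimplex (Fin d) 1 ⊆ A := by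
  obtain ⟨-, h_zero, h_single, h_single_pred, h_add⟩ := hA
  rintro _ ⟨x, hx, _, ⟨z, hz, rfl⟩, rfl⟩
  have nsmul_single (j : Fin d) : (D - 1) • (Pi.single j 1 : Fin d → ℕ) = Pi.single j (D - 1) := by
    rw [← Pi.single_smul, smul_eq_mul, mul_one]
  rcases discreteSimplex.mem_one_iff.mp hx with rfl | ⟨i, rfl⟩ <;>
    rcases discreteSimplex.mem_one_iff.mp hz with rfl | ⟨j, rfl⟩ <;>
    simp [nsmul_single, h_zero, h_single, h_single_pred, h_add]

end SmoothType

theorem stmt_0_general {d D s : ℕ} (hD : 2 ≤ D) (hs : d * (D - 2) ≤ s)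
    {A : Set (Fin d → ℕ)} (hA : SmoothType d D A) :
    sumset A s = {y : Fin d → ℕ | ∑ j, y j ≤ s * D} := by
  have hD' : D - 1 + 1 = D := by omega
  have hA_eq : s • A = discreteSimplex (Fin d) (s * (D - 1 + 1)) :=
    nsmul_eq_discreteSimplex (by omega) (by rwa [Fintype.card_fin, Nat.sub_sub])
      (hD'.symm ▸ hA.subset_discreteSimplex) hA.add_image_nsmul_subset
  rw [sumset_eq_nsmul, hA_eq, hD', discreteSimplex]

theorem stmt_0 (d D : ℕ) (hd : 1 ≤ d) (hD : 3 ≤ D)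
    (A : Set (Fin d → ℕ)) (hA : SmoothType d D A) :
    sumset A (d * (D - 2)) = {y : Fin d → ℕ | ∑ j, y j ≤ d * (D - 2) * D} :=
  stmt_0_general (by omega) le_rfl hA
end

section
/- Let D ≥ 3 be an integer and let B = {0, 1, D−1, D} ⊆ ℕ. Then every natural number y with y ≤ D(D−2) belongs to the (D−2)-fold sumset (D−2)·B, i.e. y can be written as a sum of exactly D−2 elements of B (with repetition allowed). -/
open Pointwise

/-! Write `m = D - 1`. The set `{0, 1, m, m + 1}` is `{0, m} + {0, 1}`, so its `s`-fold sumset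
consists of the numbers `k * m + r` with `k, r ≤ s`. For `m ≤ s + 1` every `y ≤ s * (m + 1)` has
this form: divide `y` by `m`, but cap the quotient at `s`. -/

theorem sumset_add {M : Type*} [AddCommMonoid M] (A B : Set M) (s : ℕ) :
    sumset (A + B) s = sumset A s + sumset B s := by
  induction s with
  | zero => simp only [sumset, Set.singleton_add_singleton, add_zero]
  | succ s ih => simp only [sumset, ih, add_add_add_comm]

theorem nsmul_mem_sumset_zero_pair {M : Type*} [AddMonoid M] (a : M) {k s : ℕ} (hk : k ≤ s) :
    k • a ∈ sumset {0, a} s := by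
  induction s generalizing k with
  | zero => simp [sumset, Nat.le_zero.mp hk]
  | succ s ih =>
    cases k with
    | zero => simpa [sumset] using Set.add_mem_add (Set.mem_insert 0 {a}) (ih s.zero_le)
    | succ k =>
      rw [succ_nsmul']
      exact Set.add_mem_add (Set.mem_insert_of_mem 0 rfl) (ih (Nat.le_of_succ_le_succ hk))

theorem nsmul_add_nsmul_mem_sumset {M : Type*} [AddCommMonoid M] (a b : M) {k l s : ℕ}
    (hk : k ≤ s) (hl : l ≤ s) : k • a + l • b ∈ sumset {0, b, a, a + b} s := by
  have pair_add_pair : ({0, b, a, a + b} : Set M) = {0, a} + {0, b} := by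
    rw [Set.insert_eq 0 {a}, Set.union_add]
    simp only [Set.singleton_add, Set.image_pair, zero_add, add_zero, Set.insert_union,
      Set.singleton_union]
  rw [pair_add_pair, sumset_add]
  exact Set.add_mem_add (nsmul_mem_sumset_zero_pair a hk) (nsmul_mem_sumset_zero_pair b hl)

theorem exists_eq_mul_add_of_le {m s y : ℕ} (hm : m ≤ s + 1) (hy : y ≤ s * (m + 1)) :
    ∃ k ≤ s, ∃ r ≤ s, y = k * m + r := by
  rcases le_total y (s * m) with hle | hge
  · rcases m.eq_zero_or_pos with rfl | hpos
    · exact ⟨0, s.zero_le, 0, s.zero_le, by simpa using hle⟩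
    · exact ⟨y / m, Nat.div_le_of_le_mul (by rwa [mul_comm]), y % m,
        Nat.le_of_lt_succ ((y.mod_lt hpos).trans_le hm), (Nat.div_add_mod' y m).symm⟩
  · exact ⟨s, le_rfl, y - s * m, Nat.sub_le_iff_le_add'.mpr hy, (Nat.add_sub_of_le hge).symm⟩

theorem stmt_2_general {D s y : ℕ} (hD : 1 ≤ D) (hs : D - 2 ≤ s) (hy : y ≤ D * s) :
    y ∈ sumset ({0, 1, D - 1, D} : Set ℕ) s := by
  obtain ⟨m, rfl⟩ := Nat.exists_eq_add_of_le' hD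
  obtain ⟨k, hk, r, hr, rfl⟩ : ∃ k ≤ s, ∃ r ≤ s, y = k * m + r :=
    exists_eq_mul_add_of_le (by omega) (by rwa [mul_comm])
  simpa using nsmul_add_nsmul_mem_sumset m 1 hk hr

theorem stmt_2 (D : ℕ) (hD : 3 ≤ D) (y : ℕ) (hy : y ≤ D * (D - 2)) :
    y ∈ sumset ({0, 1, D - 1, D} : Set ℕ) (D - 2) :=
  stmt_2_general (by omega) le_rfl hy
end

section
/- Let d ≥ 1, D ≥ 2 and s be natural numbers. Then Δ_s + {0, Dε₁, …, Dε_d} = Δ_{s+1} (pointwise sum of sets in ℕ^d) if and only if s·D ≥ d·(D−1) (equivalently, s ≥ d − d/D as rational numbers). -/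
open Pointwise

/-!
A vector `y` with `n < |y| ≤ n + D` lies in `{|y| ≤ n} + {0, Dε₁, …, Dε_d}` exactly when some
coordinate is at least `D`, since then `Dεᵢ` can be subtracted. So equality fails exactly when some
`y` in this range has all coordinates at most `D - 1`. The sums of such vectors are precisely the
numbers up to `d * (D - 1)`, so one of them exceeds `n` exactly when `n < d * (D - 1)`, and then
`n + 1` is itself such a sum.
-/

section

variable {ι : Type*}

theorem exists_le_sum_eq_iff [Fintype ι] {b : ι → ℕ} {n : ℕ} :
    (∃ y ≤ b, ∑ j, y j = n) ↔ n ≤ ∑ j, b j := by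
  classical
  constructor
  · rintro ⟨y, hyb, rfl⟩
    exact Finset.sum_le_sum fun j _ ↦ hyb j
  intro hn
  induction n with
  | zero => exact ⟨0, fun _ ↦ Nat.zero_le _, by simp⟩
  | succ n ih =>
    obtain ⟨y, hyb, hsum⟩ := ih (by omega)
    obtain ⟨i, -, hi⟩ : ∃ i ∈ Finset.univ, y i < b i :=
      Finset.exists_lt_of_sum_lt (by omega)
    refine ⟨y + Pi.single i 1, fun j ↦ ?_, by simp [Finset.sum_add_distrib, hsum]⟩
    obtain rfl | hj := eq_or_ne j i
    · simpa using hi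
    · simpa [hj] using hyb j

variable [DecidableEq ι]

theorem pi_single_le_iff {M : Type*} [AddZeroClass M] [Preorder M] [CanonicallyOrderedAdd M]
    {i : ι} {a : M} {f : ι → M} : Pi.single i a ≤ f ↔ a ≤ f i := by
  simp [Pi.single, update_le_iff]

variable [Fintype ι]

theorem mem_sum_le_add_insert_zero_range_single_iff {n D : ℕ} {y : ι → ℕ} :
    y ∈ {y : ι → ℕ | ∑ j, y j ≤ n} + insert 0 (Set.range fun i ↦ Pi.single i D) ↔
      ∑ j, y j ≤ n ∨ ∑ j, y j ≤ n + D ∧ ∃ i, D ≤ y i := by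
  constructor
  · rintro ⟨x, hx : ∑ j, x j ≤ n, -, rfl | ⟨i, rfl⟩, rfl⟩
    · exact .inl (by simpa using hx)
    · exact .inr ⟨by simpa [Finset.sum_add_distrib] using hx, i, by simp⟩
  · rintro (hy | ⟨hy, i, hi⟩)
    · exact ⟨y, hy, 0, Set.mem_insert _ _, add_zero y⟩
    · obtain ⟨x, rfl⟩ := exists_add_of_le (pi_single_le_iff.2 hi)
      have hx : ∑ j, x j ≤ n := by
        simp only [Pi.add_apply, Finset.sum_add_distrib, Finset.sum_pi_single', Finset.mem_univ,
          if_true] at hy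
        omega
      exact ⟨x, hx, Pi.single i D, Set.mem_insert_of_mem _ ⟨i, rfl⟩, add_comm _ _⟩

theorem stmt_3_general (n D : ℕ) :
    {y : ι → ℕ | ∑ j, y j ≤ n} + insert 0 (Set.range fun i ↦ Pi.single i D) =
        {y : ι → ℕ | ∑ j, y j ≤ n + D} ↔
      Fintype.card ι * (D - 1) ≤ n := by
  have exists_small_iff (m : ℕ) :
      (∃ y : ι → ℕ, y ≤ (fun _ ↦ D - 1) ∧ ∑ j, y j = m) ↔ m ≤ Fintype.card ι * (D - 1) := by
    simpa using exists_le_sum_eq_iff (b := fun _ : ι ↦ D - 1)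
  simp only [Set.ext_iff, mem_sum_le_add_insert_zero_range_single_iff, Set.mem_ofPred_eq]
  constructor
  · intro h
    by_contra! hlt
    obtain ⟨y, hyD, hsum⟩ := (exists_small_iff (n + 1)).2 hlt
    have hD : 1 ≤ D := Nat.pos_of_ne_zero (by rintro rfl; simp at hlt)
    obtain hle | ⟨-, i, hi⟩ := (h y).2 (by omega)
    · omega
    · have : y i ≤ D - 1 := hyD i
      omega
  · refine fun hn y ↦ ⟨by omega, fun hy ↦ or_iff_not_imp_left.2 fun hlt ↦ ⟨hy, ?_⟩⟩
    by_contra! hall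
    have hle := (exists_small_iff _).1 ⟨y, fun i ↦ Nat.le_sub_one_of_lt (hall i), rfl⟩
    omega

end

theorem stmt_3 (d D s : ℕ) (hd : 1 ≤ d) (hD : 2 ≤ D) :
    ({y : Fin d → ℕ | ∑ j, y j ≤ s * D} +
        insert (0 : Fin d → ℕ) (Set.range fun i : Fin d => Pi.single i D)
      = {y : Fin d → ℕ | ∑ j, y j ≤ (s + 1) * D})
    ↔ d * (D - 1) ≤ s * D := by
  simpa only [Nat.succ_mul, Fintype.card_fin] using stmt_3_general (ι := Fin d) (s * D) D
end

section
/- Let d ≥ 1 and D ≥ 2 be integers and let A ⊆ ℕ^d be a set such that 0 ∈ A, Dεᵢ ∈ A for all 1 ≤ i ≤ d, and |a| ≤ D for every a ∈ A. Then the following are equivalent: (i) εᵢ ∈ A and (D−1)εᵢ ∈ A for all 1 ≤ i ≤ d, and εᵢ + (D−1)ε_j ∈ A for all 1 ≤ i, j ≤ d; (ii) there exists s₀ ∈ ℕ such that sA = Δ_s for all s ≥ s₀. -/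
open Pointwise

/-!
Adding a slack coordinate with value `D - |a|` turns `A` into a subset of the hyperplane `|z| = D`
in one more variable and condition (i) into the single condition `εᵢ + (D - 1)εⱼ ∈ A` for all
`i`, `j`. In this homogeneous setting, put `k = D - 1`.

If the condition holds and `|y| = s(k + 1)` with `s` large, some coordinate `y j` is large. For
`i ≠ j`, write `y i = q(k + 1) + r` with `r ≤ k`, and use `q` copies of `(k + 1)εᵢ` and `r` copies
of `εᵢ + kεⱼ`; what is left of `y j` is a nonnegative multiple of `k + 1`.

Conversely, if `εᵢ + Nεⱼ` is a sum of elements of `A`, then some summand `a` has `a i ≠ 0`, and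
`|a| = k + 1` forces `a = εᵢ + kεⱼ`.
-/

section Sumset

variable {M : Type*}

lemma image_sumset {N F : Type*} [AddMonoid M] [AddMonoid N] [FunLike F M N]
    [AddMonoidHomClass F M N] (f : F) (A : Set M) (s : ℕ) :
    f '' sumset A s = sumset (f '' A) s := by
  induction s with
  | zero => simp [sumset]
  | succ s ih => simp only [sumset, Set.image_add, ih]

lemma sum_eq_nsmul_of_mem_sumset {ι N : Type*} [Fintype ι] [AddCommMonoid N] {A : Set (ι → N)}
    {c : N} (hA : ∀ a ∈ A, ∑ i, a i = c) {s : ℕ} {x : ι → N} (hx : x ∈ sumset A s) :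
    ∑ i, x i = s • c := by
  induction s generalizing x with
  | zero =>
    obtain rfl : x = 0 := hx
    simp
  | succ s ih =>
    obtain ⟨a, ha, b, hb, rfl⟩ := hx
    simp only [Pi.add_apply, Finset.sum_add_distrib, hA a ha, ih hb, succ_nsmul']

variable [AddCommMonoid M] {A : Set M}

lemma exists_mem_le_map_ne_zero_of_mem_sumset {N : Type*} [AddMonoid N] [Preorder M]
    [CanonicallyOrderedAdd M] (f : M →+ N) {s : ℕ} {x : M} (hx : x ∈ sumset A s) (hf : f x ≠ 0) :
    ∃ a ∈ A, a ≤ x ∧ f a ≠ 0 := by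
  induction s generalizing x with
  | zero =>
    obtain rfl : x = 0 := hx
    exact absurd (map_zero f) hf
  | succ s ih =>
    obtain ⟨a, ha, b, hb, rfl⟩ := hx
    by_cases hfa : f a = 0
    · obtain ⟨a', ha', hle, hfa'⟩ := ih hb (by simpa [hfa] using hf)
      exact ⟨a', ha', hle.trans le_add_self, hfa'⟩
    · exact ⟨a, ha, le_self_add, hfa⟩

lemma add_mem_sumset {s t : ℕ} {x y : M} (hx : x ∈ sumset A s) (hy : y ∈ sumset A t) :
    x + y ∈ sumset A (s + t) := by
  induction s generalizing x with
  | zero =>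
    obtain rfl : x = 0 := hx
    simpa using hy
  | succ s ih =>
    obtain ⟨a, ha, b, hb, rfl⟩ := hx
    rw [Nat.succ_add, add_assoc]
    exact Set.add_mem_add ha (ih hb)

lemma nsmul_mem_sumset {x : M} (hx : x ∈ A) (n : ℕ) : n • x ∈ sumset A n := by
  induction n with
  | zero => simp [sumset]
  | succ n ih =>
    rw [succ_nsmul']
    exact Set.add_mem_add hx ih

lemma sum_mem_sumset {ι : Type*} {S : Finset ι} {f : ι → M} {n : ι → ℕ}
    (h : ∀ i ∈ S, f i ∈ sumset A (n i)) : ∑ i ∈ S, f i ∈ sumset A (∑ i ∈ S, n i) := by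
  classical
  induction S using Finset.induction_on with
  | empty => simp [sumset]
  | insert i S hi ih =>
    rw [Finset.sum_insert hi, Finset.sum_insert hi]
    exact add_mem_sumset (h i (S.mem_insert_self i))
      (ih fun j hj => h j (Finset.mem_insert_of_mem hj))

lemma nsmul_add_mod_nsmul_mem_sumset {k : ℕ} {x z : M} (hx : (k + 1) • x ∈ A)
    (hxz : x + k • z ∈ A) (n : ℕ) :
    n • x + (n % (k + 1)) • k • z ∈ sumset A (n / (k + 1) + n % (k + 1)) := by
  have decomposition : n • x + (n % (k + 1)) • k • z =
      (n / (k + 1)) • (k + 1) • x + (n % (k + 1)) • (x + k • z) := by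
    rw [nsmul_add, ← add_assoc, ← mul_nsmul x, ← add_nsmul x, Nat.div_add_mod]
  rw [decomposition]
  exact add_mem_sumset (nsmul_mem_sumset hx _) (nsmul_mem_sumset hxz _)

variable {ι : Type*} [Fintype ι] {k s : ℕ} {e : ι → M} {y : ι → ℕ}

lemma sum_nsmul_mem_sumset_of_mul_sum_mod_le [DecidableEq ι] (he : ∀ i j, e i + k • e j ∈ A)
    (hy : ∑ i, y i = s * (k + 1)) {j : ι}
    (hj : k * ∑ i ∈ Finset.univ.erase j, y i % (k + 1) ≤ y j) :
    ∑ i, y i • e i ∈ sumset A s := by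
  set S := Finset.univ.erase j
  set Q := ∑ i ∈ S, y i / (k + 1) with hQ
  set R := ∑ i ∈ S, y i % (k + 1) with hR
  have hdiag (i : ι) : (k + 1) • e i ∈ A := by
    rw [succ_nsmul']
    exact he i i
  have hsum : y j + ((k + 1) * Q + R) = s * (k + 1) := by
    rw [hQ, hR, Finset.mul_sum, ← Finset.sum_add_distrib]
    simp only [Nat.div_add_mod]
    rw [← hy, Finset.add_sum_erase _ _ (Finset.mem_univ j)]
  obtain ⟨m, rfl⟩ : ∃ m, s = Q + R + m :=
    Nat.exists_eq_add_of_le (Nat.le_of_mul_le_mul_right (by linarith) k.succ_pos)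
  have hyj : y j = R * k + m * (k + 1) := by linarith
  have hoff : ∑ i ∈ S, (y i • e i + (y i % (k + 1)) • k • e j) ∈ sumset A (Q + R) := by
    rw [hQ, hR, ← Finset.sum_add_distrib]
    exact sum_mem_sumset fun i _ => nsmul_add_mod_nsmul_mem_sumset (hdiag i) (he i j) (y i)
  have hsplit : ∑ i, y i • e i =
      ∑ i ∈ S, (y i • e i + (y i % (k + 1)) • k • e j) + m • (k + 1) • e j := by
    rw [← Finset.sum_erase_add _ _ (Finset.mem_univ j), Finset.sum_add_distrib,
      ← Finset.sum_smul, hyj, add_nsmul, mul_nsmul', mul_nsmul', add_assoc]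
  rw [hsplit]
  exact add_mem_sumset hoff (nsmul_mem_sumset (hdiag j) m)

lemma sum_nsmul_mem_sumset_of_card_sq_mul_le [Nonempty ι] (he : ∀ i j, e i + k • e j ∈ A)
    (hs : Fintype.card ι ^ 2 * k ≤ s) (hy : ∑ i, y i = s * (k + 1)) :
    ∑ i, y i • e i ∈ sumset A s := by
  classical
  obtain ⟨j, -, hj⟩ : ∃ j ∈ Finset.univ, k * (Fintype.card ι * k) ≤ y j := by
    refine Finset.exists_le_of_sum_le Finset.univ_nonempty ?_
    calc ∑ _ : ι, k * (Fintype.card ι * k) = Fintype.card ι ^ 2 * k * k := by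
          rw [Finset.sum_const, Finset.card_univ, smul_eq_mul]
          ring
      _ ≤ s * (k + 1) := Nat.mul_le_mul hs k.le_succ
      _ = ∑ i, y i := hy.symm
  refine sum_nsmul_mem_sumset_of_mul_sum_mod_le he hy (j := j) (le_trans ?_ hj)
  gcongr
  calc ∑ i ∈ Finset.univ.erase j, y i % (k + 1)
      ≤ (Finset.univ.erase j).card * k :=
        Finset.sum_le_card_nsmul _ _ _ fun i _ => Nat.lt_succ_iff.mp (Nat.mod_lt _ k.succ_pos)
    _ ≤ Fintype.card ι * k := Nat.mul_le_mul_right _ (Finset.card_le_univ _)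

end Sumset

section Homogeneous

variable {ι : Type*} [Fintype ι] [DecidableEq ι] {k : ℕ} {A : Set (ι → ℕ)}

lemma eq_single_sum_of_le_single {N : Type*} [AddCommMonoid N] [PartialOrder N]
    [CanonicallyOrderedAdd N] {b : ι → N} {j : ι} {n : N} (hb : b ≤ Pi.single j n) :
    b = Pi.single j (∑ i, b i) := by
  have hzero (i : ι) (hij : i ≠ j) : b i = 0 := by simpa [hij] using hb i
  rw [Fintype.sum_eq_single j hzero]
  ext i
  rcases eq_or_ne i j with rfl | hij
  · simp
  · simp [hij, hzero i hij]

lemma single_one_add_single_mem_of_mem_sumset (hA : ∀ a ∈ A, ∑ i, a i = k + 1) {i j : ι}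
    {n s : ℕ} (h : Pi.single i 1 + Pi.single j n ∈ sumset A s) :
    Pi.single i 1 + Pi.single j k ∈ A := by
  obtain ⟨a, ha, hle, hai⟩ :=
    exists_mem_le_map_ne_zero_of_mem_sumset (Pi.evalAddMonoidHom _ i) h (by simp)
  have hsingle : Pi.single i 1 ≤ a :=
    update_le_iff.mpr ⟨Nat.one_le_iff_ne_zero.mpr hai, fun _ _ => Nat.zero_le _⟩
  obtain ⟨b, rfl⟩ := exists_add_of_le hsingle
  have hsum : ∑ l, b l = k := by
    have := hA _ ha
    simp only [Pi.add_apply, Finset.sum_add_distrib, Fintype.sum_pi_single'] at this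
    linarith
  rwa [eq_single_sum_of_le_single (le_of_add_le_add_left hle), hsum] at ha

theorem forall_single_one_add_single_mem_iff [Nonempty ι] (hA : ∀ a ∈ A, ∑ i, a i = k + 1) :
    (∀ i j, Pi.single i 1 + Pi.single j k ∈ A) ↔
      ∃ s₀, ∀ s ≥ s₀, sumset A s = {y | ∑ i, y i = s * (k + 1)} := by
  constructor
  · refine fun h => ⟨Fintype.card ι ^ 2 * k, fun s hs => Set.Subset.antisymm
      (fun y hy => sum_eq_nsmul_of_mem_sumset hA hy) fun y hy => ?_⟩
    have he (i j : ι) : Pi.single i 1 + k • Pi.single j 1 ∈ A := by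
      simpa only [← Pi.single_smul, nsmul_one, Nat.cast_id] using h i j
    simpa only [← Pi.single_smul, smul_eq_mul, mul_one, Finset.univ_sum_single] using
      sum_nsmul_mem_sumset_of_card_sq_mul_le he hs hy
  · rintro ⟨s₀, h⟩ i j
    apply single_one_add_single_mem_of_mem_sumset hA (n := s₀ * (k + 1) + k) (s := s₀ + 1)
    rw [h _ (s₀.le_add_right 1), Set.mem_ofPred_eq]
    simp only [Pi.add_apply, Finset.sum_add_distrib, Fintype.sum_pi_single']
    ring

end Homogeneous

section Homogenization

variable {ι : Type*}

/-- The additive map forgetting the slack coordinate `none`. -/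
def dehomogenize : (Option ι → ℕ) →+ (ι → ℕ) where
  toFun z := z ∘ some
  map_zero' := rfl
  map_add' _ _ := rfl

lemma dehomogenize_single_some [DecidableEq ι] (i : ι) (n : ℕ) :
    dehomogenize (Pi.single (some i) n) = Pi.single i n := by
  ext j
  simp [dehomogenize, Pi.single_apply]

lemma dehomogenize_single_none [DecidableEq ι] (n : ℕ) :
    dehomogenize (Pi.single (none : Option ι) n) = 0 := by
  ext j
  simp [dehomogenize]

variable [Fintype ι]

lemma sum_eq_none_add_sum_dehomogenize (z : Option ι → ℕ) :
    ∑ o, z o = z none + ∑ i, dehomogenize z i :=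
  Fintype.sum_option z

lemma dehomogenize_injOn_sum_eq (n : ℕ) :
    Set.InjOn dehomogenize {z : Option ι → ℕ | ∑ o, z o = n} := by
  intro z hz w hw h
  rw [Set.mem_ofPred_eq, sum_eq_none_add_sum_dehomogenize] at hz hw
  rw [h, ← hw, Nat.add_right_cancel_iff] at hz
  funext o
  exact o.rec hz (congrFun h)

lemma dehomogenize_image_sum_eq (n : ℕ) :
    dehomogenize '' {z : Option ι → ℕ | ∑ o, z o = n} = {y | ∑ i, y i ≤ n} := by
  ext y
  constructor
  · rintro ⟨z, rfl, rfl⟩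
    rw [Set.mem_ofPred_eq, sum_eq_none_add_sum_dehomogenize]
    exact Nat.le_add_left _ _
  · intro hy
    refine ⟨fun o => o.elim (n - ∑ i, y i) y, ?_, rfl⟩
    rw [Set.mem_ofPred_eq, Fintype.sum_option]
    exact Nat.sub_add_cancel hy

/-- The homogenization of `A` in degree `D`: the elements of `A`, each extended by a slack
coordinate that brings its coordinate sum to `D`. Elements of `A` with coordinate sum above `D`
are lost. -/
def homogenization (A : Set (ι → ℕ)) (D : ℕ) : Set (Option ι → ℕ) :=
  {z | ∑ o, z o = D} ∩ dehomogenize ⁻¹' A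

variable {A : Set (ι → ℕ)} {D : ℕ}

lemma dehomogenize_image_homogenization (hle : ∀ a ∈ A, ∑ i, a i ≤ D) :
    dehomogenize '' homogenization A D = A := by
  rw [homogenization, Set.image_inter_preimage, dehomogenize_image_sum_eq]
  exact Set.inter_eq_right.mpr hle

lemma sumset_homogenization_eq_iff (hle : ∀ a ∈ A, ∑ i, a i ≤ D) (s : ℕ) :
    sumset (homogenization A D) s = {z | ∑ o, z o = s * D} ↔
      sumset A s = {y | ∑ i, y i ≤ s * D} := by
  have hsub : sumset (homogenization A D) s ⊆ {z | ∑ o, z o = s * D} :=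
    fun _ hz => sum_eq_nsmul_of_mem_sumset (fun _ ha => ha.1) hz
  rw [← (dehomogenize_injOn_sum_eq (s * D)).image_eq_image_iff hsub subset_rfl, image_sumset,
    dehomogenize_image_homogenization hle, dehomogenize_image_sum_eq]

lemma forall_single_one_add_single_mem_homogenization_iff [DecidableEq ι] {k : ℕ} :
    (∀ i j, Pi.single i 1 + Pi.single j k ∈ homogenization A (k + 1)) ↔
      0 ∈ A ∧ (∀ i, Pi.single i 1 ∈ A) ∧ (∀ i, Pi.single i k ∈ A) ∧
        ∀ i j, Pi.single i 1 + Pi.single j k ∈ A := by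
  have hsum (i j : Option ι) :
      ∑ o, (Pi.single i 1 + Pi.single j k : Option ι → ℕ) o = k + 1 := by
    simp only [Pi.add_apply, Finset.sum_add_distrib, Fintype.sum_pi_single', add_comm]
  simp only [homogenization, Set.mem_inter_iff, Set.mem_ofPred_eq, hsum, true_and,
    Set.mem_preimage, map_add, Option.forall, dehomogenize_single_none,
    dehomogenize_single_some, zero_add, add_zero, forall_and]
  tauto

end Homogenization

theorem stmt_8_general {ι : Type*} [Fintype ι] [DecidableEq ι] {D : ℕ} (hD : D ≠ 0)
    {A : Set (ι → ℕ)} (h0 : 0 ∈ A) (hle : ∀ a ∈ A, ∑ j, a j ≤ D) :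
    ((∀ i, Pi.single i 1 ∈ A) ∧ (∀ i, Pi.single i (D - 1) ∈ A) ∧
      ∀ i j, Pi.single i 1 + Pi.single j (D - 1) ∈ A) ↔
    ∃ s₀, ∀ s ≥ s₀, sumset A s = {y | ∑ j, y j ≤ s * D} := by
  obtain ⟨k, rfl⟩ := Nat.exists_eq_succ_of_ne_zero hD
  simp only [← sumset_homogenization_eq_iff hle, Nat.succ_eq_add_one, Nat.add_sub_cancel]
  rw [← forall_single_one_add_single_mem_iff fun _ ha => ha.1,
    forall_single_one_add_single_mem_homogenization_iff]
  simp only [h0, true_and]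

theorem stmt_8 (d D : ℕ) (hd : 1 ≤ d) (hD : 2 ≤ D)
    (A : Set (Fin d → ℕ)) (h0 : (0 : Fin d → ℕ) ∈ A)
    (hDeps : ∀ i : Fin d, Pi.single i D ∈ A)
    (hle : ∀ a ∈ A, ∑ j, a j ≤ D) :
    ((∀ i : Fin d, Pi.single i 1 ∈ A) ∧
      (∀ i : Fin d, Pi.single i (D - 1) ∈ A) ∧
      (∀ i j : Fin d, Pi.single i 1 + Pi.single j (D - 1) ∈ A))
    ↔ (∃ s₀ : ℕ, ∀ s ≥ s₀, sumset A s = {y : Fin d → ℕ | ∑ j, y j ≤ s * D}) := by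
  exact stmt_8_general (by omega) h0 hle
end

section
/- Let d ≥ 1, D ≥ 2, e and s be natural numbers with 1 ≤ e ≤ D and e ∣ D. Then Δ_{s,e} + {0, Dε₁, …, Dε_d} = Δ_{s+1,e} (pointwise sum of sets in ℕ^d) if and only if s·D + (e−1) ≥ d·(D−1) (equivalently, s ≥ d − (d+e−1)/D as rational numbers). -/
open Pointwise

/-- `ℕ_e^d = {y ∈ ℕ^d : e ∣ |y|}`. -/
def NatE (d e : ℕ) : Set (Fin d → ℕ) := {y | e ∣ ∑ j, y j}

/-- `Δ_{s,e} = {y ∈ ℕ_e^d : |y| ≤ sD}`. -/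
def DeltaE (d D e s : ℕ) : Set (Fin d → ℕ) := {y | e ∣ ∑ j, y j ∧ ∑ j, y j ≤ s * D}

/-- The hole set `H = ℕ_e^d \ ⟨A⟩`, where `⟨A⟩` is the additive submonoid generated by `A`. -/
def Holes (d e : ℕ) (A : Set (Fin d → ℕ)) : Set (Fin d → ℕ) :=
  NatE d e \ (AddSubmonoid.closure A : Set (Fin d → ℕ))

/-- The set `{0, Dε₁, …, Dε_d}`. -/
def Erays (d D : ℕ) : Set (Fin d → ℕ) :=
  insert 0 (Set.range fun i : Fin d => Pi.single i D)

/-- `A ⊆ ℕ^d` is of one-singular-point type for `D` and `e`: every `a ∈ A` satisfies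
`|a| ≤ D` and `e ∣ |a|`, and `A` contains `0`, the vectors `(D-1)εᵢ + εⱼ` for all `i, j`,
and the vectors `(D-e)εᵢ` for all `i`. -/
def OneSingType (d D e : ℕ) (A : Set (Fin d → ℕ)) : Prop :=
  (∀ a ∈ A, ∑ j, a j ≤ D ∧ e ∣ ∑ j, a j) ∧
  (0 : Fin d → ℕ) ∈ A ∧
  (∀ i j : Fin d, Pi.single i (D - 1) + Pi.single j 1 ∈ A) ∧
  (∀ i : Fin d, Pi.single i (D - e) ∈ A)

/-!
Adding a vector `Dεᵢ` reaches exactly the points whose `i`-th coordinate is at least `D`, so the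
sumset misses precisely the points of the shell `Δ_{s+1,e} \ Δ_{s,e}` that lie in the box
`{0, …, D-1}^d`. Coordinate sums on the box fill the interval from `0` to `d(D-1)`, and the smallest
sum on the shell is `sD + e`; hence nothing is missed if and only if `d(D-1) < sD + e`.
-/

theorem sum_add_single {ι M : Type*} [Fintype ι] [DecidableEq ι] [AddCommMonoid M] (f : ι → M)
    (i : ι) (a : M) : ∑ j, (f + Pi.single i a : ι → M) j = ∑ j, f j + a := by
  simp [Finset.sum_add_distrib]

theorem exists_forall_lt_sum_eq_iff {ι : Type*} [Fintype ι] {D n : ℕ} (hD : 0 < D) :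
    (∃ y : ι → ℕ, (∀ i, y i < D) ∧ ∑ i, y i = n) ↔ n ≤ Fintype.card ι * (D - 1) := by
  constructor
  · rintro ⟨y, hlt, rfl⟩
    exact Finset.sum_le_card_nsmul _ _ _ fun i _ ↦ Nat.le_sub_one_of_lt (hlt i)
  · intro hn
    let corner : ι →₀ ℕ := Finsupp.equivFunOnFinite.symm fun _ ↦ D - 1
    have hcorner : n ≤ corner.degree := by simpa [corner, Finsupp.degree_eq_sum] using hn
    obtain ⟨y, hle, hsum⟩ := corner.exists_le_degree_eq n hcorner
    exact ⟨y, fun i ↦ (hle i).trans_lt (Nat.sub_one_lt_of_lt hD),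
      by rw [← hsum, Finsupp.degree_eq_sum]⟩

section DeltaE

variable {d D e s : ℕ} {y : Fin d → ℕ}

theorem add_single_mem_deltaE_succ_iff (hdvd : e ∣ D) (i : Fin d) :
    y + Pi.single i D ∈ DeltaE d D e (s + 1) ↔ y ∈ DeltaE d D e s := by
  simp only [DeltaE, Set.mem_ofPred_eq, sum_add_single, Nat.dvd_add_left hdvd, Nat.succ_mul,
    Nat.add_le_add_iff_right]

theorem deltaE_subset_succ (d D e s : ℕ) : DeltaE d D e s ⊆ DeltaE d D e (s + 1) :=
  fun _ hy ↦ ⟨hy.1, hy.2.trans (Nat.mul_le_mul_right D s.le_succ)⟩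

theorem mem_deltaE_add_erays_iff (hdvd : e ∣ D) :
    y ∈ DeltaE d D e s + Erays d D ↔
      y ∈ DeltaE d D e s ∨ y ∈ DeltaE d D e (s + 1) ∧ ∃ i, D ≤ y i := by
  constructor
  · rintro ⟨x, hx, _, rfl | ⟨i, rfl⟩, rfl⟩
    · exact Or.inl (by simpa using hx)
    · exact Or.inr ⟨(add_single_mem_deltaE_succ_iff hdvd i).2 hx, i, by simp⟩
  · rintro (hy | ⟨hy, i, hi⟩)
    · exact ⟨y, hy, 0, Set.mem_insert _ _, add_zero y⟩
    · have hle : Pi.single i D ≤ y := update_le_iff.2 ⟨hi, fun _ _ ↦ Nat.zero_le _⟩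
      have hsub : y - Pi.single i D + Pi.single i D = y := tsub_add_cancel_of_le hle
      refine ⟨y - Pi.single i D, ?_, Pi.single i D, Or.inr ⟨i, rfl⟩, hsub⟩
      rwa [← add_single_mem_deltaE_succ_iff hdvd i, hsub]

theorem deltaE_add_erays_eq_succ_iff (hdvd : e ∣ D) :
    DeltaE d D e s + Erays d D = DeltaE d D e (s + 1) ↔
      ∀ y ∈ DeltaE d D e (s + 1) \ DeltaE d D e s, ∃ i, D ≤ y i := by
  simp only [Set.ext_iff, mem_deltaE_add_erays_iff hdvd, Set.mem_sdiff]
  refine forall_congr' fun y ↦ ?_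
  have hmono : y ∈ DeltaE d D e s → y ∈ DeltaE d D e (s + 1) := @deltaE_subset_succ d D e s y
  tauto

theorem mem_deltaE_succ_sdiff_iff (he : 0 < e) (hdvd : e ∣ D) :
    y ∈ DeltaE d D e (s + 1) \ DeltaE d D e s ↔
      e ∣ ∑ j, y j ∧ s * D + e ≤ ∑ j, y j ∧ ∑ j, y j ≤ (s + 1) * D := by
  constructor
  · rintro ⟨⟨hy, hle⟩, hnot⟩
    have hlt : s * D < ∑ j, y j := not_le.1 fun h ↦ hnot ⟨hy, h⟩
    exact ⟨hy, Nat.le_of_lt_add_of_dvd (Nat.add_lt_add_right hlt e)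
      ((hdvd.mul_left s).add dvd_rfl) hy, hle⟩
  · rintro ⟨hy, hge, hle⟩
    exact ⟨⟨hy, hle⟩, fun hmem ↦ by have := hmem.2; omega⟩

end DeltaE

theorem stmt_12 (d D e s : ℕ) (hd : 1 ≤ d) (hD : 2 ≤ D) (he : 1 ≤ e) (heD : e ≤ D)
    (hdvd : e ∣ D) :
    DeltaE d D e s + Erays d D = DeltaE d D e (s + 1) ↔ d * (D - 1) ≤ s * D + (e - 1) := by
  rw [deltaE_add_erays_eq_succ_iff hdvd]
  simp only [mem_deltaE_succ_sdiff_iff he hdvd]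
  have hbox (n : ℕ) : (∃ y : Fin d → ℕ, (∀ i, y i < D) ∧ ∑ i, y i = n) ↔ n ≤ d * (D - 1) := by
    rw [exists_forall_lt_sum_eq_iff (by omega), Fintype.card_fin]
  constructor
  · contrapose!
    intro hlt
    obtain ⟨y, hy, hsum⟩ := (hbox (s * D + e)).2 (by omega)
    refine ⟨y, ⟨?_, hsum.ge, ?_⟩, hy⟩
    · rw [hsum]
      exact (hdvd.mul_left s).add dvd_rfl
    · rw [hsum, Nat.succ_mul]
      exact Nat.add_le_add_left heD _
  · rintro h y ⟨-, hge, -⟩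
    by_contra! hy
    have hle := (hbox _).1 ⟨y, hy, rfl⟩
    omega
end

section
/- Let d ≥ 1, D ≥ 1 and e be integers with 1 ≤ e ≤ D and e ∣ D. Let A ⊆ ℕ^{d+1} (coordinates indexed by 0, 1, …, d, with standard basis vectors ε₀, ε₁, …, ε_d) be a finite set such that every a ∈ A satisfies a₀ + a₁ + ⋯ + a_d = D and e ∣ a₀, and such that (D−1)εᵢ + ε_j ∈ A for all 1 ≤ i, j ≤ d and e·ε₀ + (D−e)·ε_j ∈ A for all 1 ≤ j ≤ d. Then the greatest common divisor of the determinants of all (d+1)×(d+1) integer matrices whose columns are elements of A equals D·e. -/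
/-!
Adding all rows of a matrix with columns in `A` to one row `k` makes row `k` constantly `D`, so
`D`, together with the common divisors of the other rows, can be pulled out of the determinant.
Conversely, `A` contains columns which agree off row `k` with those of a diagonal matrix (with
entry `e` at `0` and `1` elsewhere); the same row operation then leaves this diagonal matrix with
row `k` replaced by the constant `D`, whose determinant attains the bound.
-/

section

open Finset Matrix

variable {ι R : Type*} [Fintype ι] [DecidableEq ι] [CommRing R]

theorem det_updateRow_sum_rows (M : Matrix ι ι R) (k : ι) :
    (M.updateRow k fun j => ∑ i, M i j).det = M.det := by
  have hrow : (fun j => ∑ i, M i j) = ∑ i, (1 : R) • M i := by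
    ext j
    simp only [one_smul]
    exact (Finset.sum_apply j univ M).symm
  rw [hrow, det_updateRow_sum, one_smul]

theorem prod_dvd_det_of_dvd_rows {M : Matrix ι ι R} {v : ι → R} (h : ∀ i j, v i ∣ M i j) :
    ∏ i, v i ∣ M.det := by
  choose N hN using h
  have hM : M = of fun i j => v i * of N i j := by
    ext i j
    exact hN i j
  exact ⟨(of N).det, hM ▸ det_mul_column v (of N)⟩

theorem det_updateRow_diagonal (v w : ι → R) (k : ι) :
    ((diagonal v).updateRow k w).det = w k * ∏ i ∈ univ.erase k, v i := by
  rw [← cramer_transpose_apply, diagonal_transpose, cramer_eq_adjugate_mulVec, adjugate_diagonal,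
    mulVec_diagonal, mul_comm]

theorem mul_prod_erase_dvd_det_of_dvd_sum_col {M : Matrix ι ι R} {D : R} {v : ι → R} {k : ι}
    (hsum : ∀ j, D ∣ ∑ i, M i j) (hrow : ∀ i ≠ k, ∀ j, v i ∣ M i j) :
    D * ∏ i ∈ univ.erase k, v i ∣ M.det := by
  rw [← det_updateRow_sum_rows M k, ← sdiff_singleton_eq_erase,
    ← prod_update_of_mem (mem_univ k)]
  refine prod_dvd_det_of_dvd_rows fun i j => ?_
  obtain rfl | hi := eq_or_ne i k
  · simpa using hsum j
  · simpa [hi] using hrow i hi j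

theorem det_eq_mul_prod_erase_of_sum_col_eq {M : Matrix ι ι R} {D : R} {v : ι → R} {k : ι}
    (hsum : ∀ j, ∑ i, M i j = D) (hrow : ∀ i ≠ k, ∀ j, M i j = diagonal v i j) :
    M.det = D * ∏ i ∈ univ.erase k, v i := by
  have hM : (M.updateRow k fun j => ∑ i, M i j) = (diagonal v).updateRow k fun _ => D := by
    ext i j
    obtain rfl | hi := eq_or_ne i k
    · simpa using hsum j
    · simpa [hi] using hrow i hi j
  rw [← det_updateRow_sum_rows M k, hM, det_updateRow_diagonal]

theorem forall_dvd_det_iff_dvd_mul_prod_erase {A : Set (ι → R)} {D : R} {v : ι → R} {k : ι}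
    (hsum : ∀ a ∈ A, ∑ i, a i = D) (hdvd : ∀ a ∈ A, ∀ i ≠ k, v i ∣ a i)
    (hmem : ∀ j, ∃ a ∈ A, ∀ i ≠ k, a i = diagonal v i j) (g : R) :
    (∀ M : Matrix ι ι R, (∀ j, M.col j ∈ A) → g ∣ M.det) ↔
      g ∣ D * ∏ i ∈ univ.erase k, v i := by
  constructor
  · intro hg
    choose c hcA hc using hmem
    rw [← det_eq_mul_prod_erase_of_sum_col_eq (M := of fun i j => c j i)
      (fun j => hsum _ (hcA j)) fun i hi j => hc j i hi]
    exact hg _ hcA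
  · intro hg M hM
    exact hg.trans <| mul_prod_erase_dvd_det_of_dvd_sum_col
      (fun j => (hsum _ (hM j)).symm.dvd) fun i hi j => hdvd _ (hM j) i hi

theorem stmt_15_general {A : Set (ι → ℕ)} {D e : ℕ} {i₀ k : ι} (hk : k ≠ i₀)
    (hsum : ∀ a ∈ A, ∑ i, a i = D) (hdvd : ∀ a ∈ A, e ∣ a i₀)
    (hunit : ∀ j ≠ i₀, Pi.single k (D - 1) + Pi.single j 1 ∈ A)
    (hcorner : Pi.single i₀ e + Pi.single k (D - e) ∈ A) (g : ℤ) :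
    (∀ M : Matrix ι ι ℤ, (∀ j, ∃ a ∈ A, ∀ i, M i j = (a i : ℤ)) → g ∣ M.det) ↔
      g ∣ ((D * e : ℕ) : ℤ) := by
  let v : ι → ℤ := Pi.mulSingle i₀ e
  have hprod : (D : ℤ) * ∏ i ∈ univ.erase k, v i = (D * e : ℕ) := by
    simp [v, hk.symm]
  rw [← hprod]
  refine forall_dvd_det_iff_dvd_mul_prod_erase (A := {c | ∃ a ∈ A, ∀ i, c i = (a i : ℤ)}) ?_ ?_ ?_ g
  · rintro c ⟨a, ha, hc⟩
    simp only [hc, ← hsum a ha, Nat.cast_sum]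
  · rintro c ⟨a, ha, hc⟩ i -
    obtain rfl | hi := eq_or_ne i i₀
    · simpa [v, hc] using Int.natCast_dvd_natCast.2 (hdvd a ha)
    · simp [v, hi]
  · intro j
    obtain rfl | hj := eq_or_ne j i₀
    · refine ⟨_, ⟨_, hcorner, fun _ => rfl⟩, fun i hi => ?_⟩
      obtain rfl | hij := eq_or_ne i j <;> simp [v, *]
    · refine ⟨_, ⟨_, hunit j hj, fun _ => rfl⟩, fun i hi => ?_⟩
      obtain rfl | hij := eq_or_ne i j <;> simp [v, *]

end

theorem stmt_15 (d D e : ℕ) (hd : 1 ≤ d) (hD : 1 ≤ D) (he : 1 ≤ e) (heD : e ≤ D)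
    (hdvd : e ∣ D)
    (A : Set (Fin (d + 1) → ℕ)) (hfin : A.Finite)
    (hsum : ∀ a ∈ A, ∑ j, a j = D)
    (hdvd0 : ∀ a ∈ A, e ∣ a 0)
    (h1 : ∀ i j : Fin d, Pi.single (i.succ : Fin (d + 1)) (D - 1) +
      Pi.single (j.succ : Fin (d + 1)) 1 ∈ A)
    (h2 : ∀ j : Fin d, Pi.single (0 : Fin (d + 1)) e +
      Pi.single (j.succ : Fin (d + 1)) (D - e) ∈ A) :
    (∀ M : Matrix (Fin (d + 1)) (Fin (d + 1)) ℤ,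
        (∀ j, ∃ a ∈ A, ∀ i, M i j = (a i : ℤ)) → ((D * e : ℕ) : ℤ) ∣ M.det) ∧
    (∀ g : ℤ, (∀ M : Matrix (Fin (d + 1)) (Fin (d + 1)) ℤ,
        (∀ j, ∃ a ∈ A, ∀ i, M i j = (a i : ℤ)) → g ∣ M.det) → g ∣ ((D * e : ℕ) : ℤ)) := by
  have hgcd := stmt_15_general (Fin.succ_ne_zero ⟨0, hd⟩) hsum hdvd0
    (fun j hj => Fin.succ_pred j hj ▸ h1 _ (j.pred hj)) (h2 _)
  exact ⟨(hgcd _).2 dvd_rfl, fun g => (hgcd g).1⟩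
end

section
/- Let d ≥ 1, D and e be integers with 1 ≤ e < D and e ∣ D, and let A ⊆ ℕ^d be a finite set such that every y ∈ A satisfies |y| ≤ D and e ∣ |y|. Then e·|A| ≤ C(D+d, d) + (e−1)·C(D+d−1, d−1), where |A| is the cardinality of A; equivalently, |A| ≤ ((D/e) + d)/(D + d) · C(D+d, d). -/
/-!
Let `f n` be the number of points of `ℕ^d` with coordinate sum `n`; it is nondecreasing in `n`.
If the coordinate sums attained on `A` are congruent modulo `e`, they are at least `e` apart, so
each such sum `s` owns the block `[s, s + e)`, and `e * f s` is at most the sum of `f` over it.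
The blocks are disjoint. Replacing `f` by the constant `f D` beyond `D`, the part of the blocks
beyond `D` contributes at most `(e - 1) * f D`, and the rest at most `f 0 + ⋯ + f D`.
-/

open Finset

section SeparatedSums

variable {M : Type*} [AddCommMonoid M] [PartialOrder M] [IsOrderedAddMonoid M]
  {f : ℕ → M} {S : Finset ℕ} {e n : ℕ}

theorem nsmul_sum_le_sum_range_add (hf : Monotone f) (hf₀ : 0 ≤ f 0) (hSn : ∀ i ∈ S, i ≤ n)
    (hS : (S : Set ℕ).PairwiseDisjoint fun i ↦ Ico i (i + e)) :
    e • ∑ i ∈ S, f i ≤ ∑ j ∈ range (n + e), f j := by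
  have nsmul_le_sum_block (i : ℕ) : e • f i ≤ ∑ j ∈ Ico i (i + e), f j := by
    simpa using card_nsmul_le_sum (Ico i (i + e)) f (f i) fun j hj ↦ hf (mem_Ico.1 hj).1
  have blocks_subset : S.biUnion (fun i ↦ Ico i (i + e)) ⊆ range (n + e) := by
    intro j hj
    obtain ⟨i, hi, hij⟩ := mem_biUnion.1 hj
    exact mem_range.2 ((mem_Ico.1 hij).2.trans_le (Nat.add_le_add_right (hSn i hi) e))
  calc e • ∑ i ∈ S, f i = ∑ i ∈ S, e • f i := (sum_nsmul S e f).symm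
    _ ≤ ∑ i ∈ S, ∑ j ∈ Ico i (i + e), f j := sum_le_sum fun i _ ↦ nsmul_le_sum_block i
    _ = ∑ j ∈ S.biUnion fun i ↦ Ico i (i + e), f j := (sum_biUnion hS).symm
    _ ≤ ∑ j ∈ range (n + e), f j :=
      sum_le_sum_of_subset_of_nonneg blocks_subset fun j _ _ ↦ hf₀.trans (hf j.zero_le)

theorem nsmul_sum_le_sum_range_add_nsmul (hf : Monotone f) (hf₀ : 0 ≤ f 0)
    (hSn : ∀ i ∈ S, i ≤ n) (hS : (S : Set ℕ).PairwiseDisjoint fun i ↦ Ico i (i + e)) :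
    e • ∑ i ∈ S, f i ≤ ∑ j ∈ range n, f j + e • f n := by
  have hmin : Monotone fun j ↦ f (min j n) := fun i j hij ↦ hf (min_le_min_right n hij)
  calc e • ∑ i ∈ S, f i = e • ∑ i ∈ S, f (min i n) := by
        congr 1
        exact sum_congr rfl fun i hi ↦ by rw [min_eq_left (hSn i hi)]
    _ ≤ ∑ j ∈ range (n + e), f (min j n) :=
      nsmul_sum_le_sum_range_add hmin (by simpa using hf₀) hSn hS
    _ = ∑ j ∈ range n, f (min j n) + ∑ t ∈ range e, f (min (n + t) n) := sum_range_add _ n e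
    _ = ∑ j ∈ range n, f j + e • f n := by
      congr 1
      · exact sum_congr rfl fun j hj ↦ by rw [min_eq_left (mem_range.1 hj).le]
      · simp

end SeparatedSums

theorem pairwiseDisjoint_Ico_add_of_modEq {S : Set ℕ} {e r : ℕ} (hS : ∀ i ∈ S, i ≡ r [MOD e]) :
    S.PairwiseDisjoint fun i ↦ Ico i (i + e) := by
  have disjoint_of_lt {i j : ℕ} (hi : i ∈ S) (hj : j ∈ S) (hij : i < j) :
      Disjoint (Ico i (i + e)) (Ico j (j + e)) :=
    Ico_disjoint_Ico_consecutive _ _ _ |>.mono_right <|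
      Ico_subset_Ico_left (((hS i hi).trans (hS j hj).symm).add_le_of_lt hij)
  intro i hi j hj hij
  rcases hij.lt_or_gt with h | h
  · exact disjoint_of_lt hi hj h
  · exact (disjoint_of_lt hj hi h).symm

theorem monotone_multichoose {d : ℕ} (hd : d ≠ 0) : Monotone d.multichoose := by
  obtain ⟨k, rfl⟩ := Nat.exists_eq_succ_of_ne_zero hd
  refine monotone_nat_of_le_succ fun n ↦ ?_
  rw [Nat.multichoose_succ_succ]
  exact Nat.le_add_left _ _

section CoordinateSums

variable {ι : Type*} [Fintype ι]

theorem card_piAntidiag_univ [DecidableEq ι] (n : ℕ) :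
    #(piAntidiag (univ : Finset ι) n) = (Fintype.card ι).multichoose n := by
  rw [← map_sym_eq_piAntidiag, card_map, sym_univ, card_univ, Sym.card_sym_eq_multichoose]

theorem card_le_sum_image_multichoose (A : Finset (ι → ℕ)) :
    #A ≤ ∑ n ∈ A.image (fun y ↦ ∑ j, y j), (Fintype.card ι).multichoose n := by
  classical
  rw [card_eq_sum_card_image (fun y ↦ ∑ j, y j) A]
  refine sum_le_sum fun n _ ↦ ?_
  rw [← card_piAntidiag_univ]
  exact card_le_card fun y hy ↦ mem_piAntidiag.2 ⟨(mem_filter.1 hy).2, fun j _ ↦ mem_univ j⟩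

theorem stmt_16_general [Nonempty ι] {D e r : ℕ} (he : 1 ≤ e) {A : Finset (ι → ℕ)}
    (hA : ∀ y ∈ A, ∑ j, y j ≤ D ∧ ∑ j, y j ≡ r [MOD e]) :
    e * #A ≤ (D + Fintype.card ι).choose (Fintype.card ι) +
      (e - 1) * (D + Fintype.card ι - 1).choose (Fintype.card ι - 1) := by
  set d := Fintype.card ι
  have hd : d ≠ 0 := Fintype.card_ne_zero
  set S := A.image fun y ↦ ∑ j, y j
  have hSD : ∀ n ∈ S, n ≤ D := forall_mem_image.2 fun y hy ↦ (hA y hy).1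
  have hSr : ∀ n ∈ S, n ≡ r [MOD e] := forall_mem_image.2 fun y hy ↦ (hA y hy).2
  have sum_multichoose : ∑ n ∈ range (D + 1), d.multichoose n = (D + d).choose d := by
    rw [Nat.sum_range_multichoose, add_comm]
  have multichoose_top : d.multichoose D = (D + d - 1).choose (d - 1) := by
    rw [Nat.multichoose_eq, add_comm]
    exact Nat.choose_symm_of_eq_add (by lia)
  calc e * #A ≤ e * ∑ n ∈ S, d.multichoose n :=
        Nat.mul_le_mul_left e (card_le_sum_image_multichoose A)
    _ ≤ ∑ n ∈ range D, d.multichoose n + e * d.multichoose D :=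
      nsmul_sum_le_sum_range_add_nsmul (monotone_multichoose hd) (Nat.zero_le _) hSD
        (pairwiseDisjoint_Ico_add_of_modEq hSr)
    _ = ∑ n ∈ range (D + 1), d.multichoose n + (e - 1) * d.multichoose D := by
      rw [sum_range_succ, add_assoc, ← one_add_mul, Nat.add_sub_cancel' he]
    _ = (D + d).choose d + (e - 1) * (D + d - 1).choose (d - 1) := by
      rw [sum_multichoose, multichoose_top]

end CoordinateSums

theorem stmt_16 (d D e : ℕ) (hd : 1 ≤ d) (he : 1 ≤ e) (heD : e < D) (hdvd : e ∣ D)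
    (A : Finset (Fin d → ℕ))
    (hA : ∀ y ∈ A, ∑ j, y j ≤ D ∧ e ∣ ∑ j, y j) :
    e * A.card ≤ Nat.choose (D + d) d + (e - 1) * Nat.choose (D + d - 1) (d - 1) := by
  have : Nonempty (Fin d) := ⟨⟨0, hd⟩⟩
  simpa only [Fintype.card_fin] using
    stmt_16_general he fun y hy ↦ (hA y hy).imp_right Nat.modEq_zero_iff_dvd.2
end

section
/- Let d ≥ 3, D ≥ 3 and e be integers with 1 ≤ e < D and e ∣ D. Then, as an inequality of rational numbers, (D/e)·((d−1)(D−2) + D/e − 2) ≤ D^d/e − ((D/e + d)/(D + d))·C(D+d, d) + d. -/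
/-!
Write `m = D / e` and `c k = C(D + k, k)`. Since `C(D + d, d) / (D + d) = c (d - 1) / d`, dividing
the claim by `m` turns it, with `k = d - 1`, into
`c k / (k + 1) + (c k - (k + 1)) / m + (k (D - 2) + (m - 2)) ≤ D ^ k`,
where `2 ≤ m ≤ D`. When `k ≥ 2` increases by one, each of the three summands on the left grows by a
factor of at most `D`, so only `k = 2` remains; there the inequality is quadratic in `m`.
-/

lemma cast_add_choose_succ {K : Type*} [Field K] [CharZero K] (n k : ℕ) :
    ((n + (k + 1)).choose (k + 1) : K) = (n + k + 1) * ((n + k).choose k / (k + 1)) := by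
  have h : ((n + k + 1 : ℕ) : K) * (n + k).choose k = (n + k + 1).choose (k + 1) * (k + 1 : ℕ) :=
    mod_cast Nat.add_one_mul_choose_eq (n + k) k
  push_cast at h
  rw [← mul_div_assoc, h, mul_div_cancel_right₀ _ k.cast_add_one_ne_zero, add_assoc]

section Ordered

variable {K : Type*} [Field K] [LinearOrder K] [IsStrictOrderedRing K]

lemma cast_add_choose_succ_div_le {n : ℕ} (hn : 1 ≤ n) (k : ℕ) :
    ((n + (k + 1)).choose (k + 1) : K) / (k + 2) ≤ n * ((n + k).choose k / (k + 1)) := by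
  have hn' : (1 : K) ≤ n := mod_cast hn
  have hfactor : (n + k + 1 : K) ≤ n * (k + 2) := by
    nlinarith [mul_nonneg (sub_nonneg.2 hn') (by positivity : (0 : K) ≤ k + 1)]
  rw [cast_add_choose_succ, div_le_iff₀ (by positivity)]
  calc (n + k + 1 : K) * ((n + k).choose k / (k + 1))
      ≤ n * (k + 2) * ((n + k).choose k / (k + 1)) := by gcongr
    _ = n * ((n + k).choose k / (k + 1)) * (k + 2) := by ring

lemma two_mul_succ_le_add_choose {n k : ℕ} (hn : 2 ≤ n) (hk : 2 ≤ k) :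
    2 * (k + 1) ≤ (n + k).choose k :=
  calc 2 * (k + 1) ≤ (2 + k).choose 2 := by
        rw [Nat.choose_two_right, Nat.le_div_iff_mul_le two_pos, add_comm 2 k]
        simp only [Nat.add_succ_sub_one]
        nlinarith
    _ = (2 + k).choose k := Nat.choose_symm_add
    _ ≤ (n + k).choose k := Nat.choose_le_choose k (by gcongr)

lemma cast_add_choose_succ_sub_le {n k : ℕ} (hn : 2 ≤ n) (hk : 2 ≤ k) :
    ((n + (k + 1)).choose (k + 1) : K) - (k + 2) ≤ n * ((n + k).choose k - (k + 1)) := by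
  have hn' : (2 : K) ≤ n := mod_cast hn
  have hk' : (2 : K) ≤ k := mod_cast hk
  have hq : 2 ≤ ((n + k).choose k : K) / (k + 1) := by
    rw [le_div_iff₀ (by positivity)]
    exact_mod_cast two_mul_succ_le_add_choose hn hk
  have hchoose : ((n + k).choose k : K) = (n + k).choose k / (k + 1) * (k + 1) := by field_simp
  rw [cast_add_choose_succ, hchoose, mul_div_cancel_right₀ _ (by positivity)]
  generalize ((n + k).choose k : K) / (k + 1) = q at hq
  have hcoeff : (n : K) - 1 ≤ n * k - k - 1 := by nlinarith
  have hcoeff_mul : 2 * (n * k - k - 1 : K) ≤ q * (n * k - k - 1) :=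
    mul_le_mul_of_nonneg_right hq (by linarith)
  linarith

lemma add_choose_two_bound {n : ℕ} {m : K} (hm : 2 ≤ m) (hmn : m ≤ n) :
    ((n + 2).choose 2 : K) / 3 + ((n + 2).choose 2 - 3) / m + (2 * (n - 2) + (m - 2)) ≤
      (n : K) ^ 2 := by
  have : 0 < m := by linarith
  have hn : 2 ≤ n := by exact_mod_cast hm.trans hmn
  -- Integrality of `n` matters here: the product is negative for `2 < n < 11 / 5`.
  have hslope : 0 ≤ (5 * n - 11 : K) * (n - 2) := by
    rcases hn.eq_or_lt with rfl | hn
    · simp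
    · have hn' : (3 : K) ≤ n := mod_cast hn
      exact mul_nonneg (by linarith) (by linarith)
  -- This quadratic has discriminant `-47`.
  have hendpoint : 0 ≤ (7 * n ^ 2 - 39 * n + 56 : K) := by nlinarith [sq_nonneg (14 * n - 39 : K)]
  -- Up to the factor `6 * m`, the difference is a concave quadratic in `m`; removing its leading
  -- term as `6 * ((m - 2) * (n - m))` leaves an affine function, expanded here at `m = 2`.
  have hdecomp : (n : K) ^ 2 - ((n + 2).choose 2 / 3 + ((n + 2).choose 2 - 3) / m +
        (2 * (n - 2) + (m - 2))) =
      (6 * ((m - 2) * (n - m)) + (m - 2) * ((5 * n - 11) * (n - 2)) +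
        (7 * n ^ 2 - 39 * n + 56)) / (6 * m) := by
    rw [Nat.cast_choose_two]
    push_cast
    field_simp
    ring
  rw [← sub_nonneg, hdecomp]
  have : 0 ≤ m - 2 := sub_nonneg.2 hm
  have : 0 ≤ n - m := sub_nonneg.2 hmn
  positivity

lemma add_choose_bound {n k : ℕ} {m : K} (hk : 2 ≤ k) (hm : 2 ≤ m) (hmn : m ≤ n) :
    ((n + k).choose k : K) / (k + 1) + ((n + k).choose k - (k + 1)) / m +
      (k * (n - 2) + (m - 2)) ≤ (n : K) ^ k := by
  have hn' : (2 : K) ≤ n := hm.trans hmn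
  have hn : 2 ≤ n := mod_cast hn'
  induction k, hk using Nat.le_induction with
  | base => convert add_choose_two_bound hm hmn using 3 <;> norm_num
  | succ k hk ih =>
    have hk' : (2 : K) ≤ k := mod_cast hk
    have hquot := cast_add_choose_succ_div_le (K := K) (one_le_two.trans hn) k
    have hdefect : (((n + (k + 1)).choose (k + 1) : K) - (k + 2)) / m ≤
        n * (((n + k).choose k - (k + 1)) / m) := by
      rw [← mul_div_assoc]
      have := cast_add_choose_succ_sub_le (K := K) hn hk
      gcongr
    have hlin : (k + 1 : K) * (n - 2) + (m - 2) ≤ n * (k * (n - 2) + (m - 2)) := by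
      have : (0 : K) ≤ n - 2 := sub_nonneg.2 hn'
      have : 0 ≤ m - 2 := sub_nonneg.2 hm
      calc (k + 1 : K) * (n - 2) + (m - 2) ≤ 2 * (k * (n - 2) + (m - 2)) := by nlinarith
        _ ≤ n * (k * (n - 2) + (m - 2)) := by gcongr
    have hmul := mul_le_mul_of_nonneg_left ih n.cast_nonneg
    rw [pow_succ']
    push_cast
    rw [add_assoc (k : K) 1 1, one_add_one_eq_two]
    linarith

end Ordered

theorem stmt_17_general {K : Type*} [Field K] [LinearOrder K] [IsStrictOrderedRing K]
    (d D : ℕ) (e : K) (hd : 3 ≤ d) (he : 1 ≤ e) (heD : 2 * e ≤ D) :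
    ((D : K) / e) * (((d : K) - 1) * ((D : K) - 2) + (D : K) / e - 2)
      ≤ (D : K) ^ d / e - (((D : K) / e + d) / ((D : K) + d)) * (Nat.choose (D + d) d : K)
        + d := by
  obtain ⟨k, rfl⟩ := Nat.exists_eq_add_of_le' (one_le_two.trans (Nat.le_of_succ_le hd))
  have he_pos : 0 < e := one_pos.trans_le he
  have hm : 2 ≤ (D : K) / e := (le_div_iff₀ he_pos).2 heD
  have hm_pos : 0 < (D : K) / e := two_pos.trans_le hm
  have hmD : (D : K) / e ≤ D := div_le_self D.cast_nonneg he
  have hpow : (D : K) ^ (k + 1) / e = D / e * D ^ k := by ring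
  have hbound := mul_le_mul_of_nonneg_left
    (add_choose_bound (Nat.le_of_succ_le_succ hd) hm hmD) hm_pos.le
  rw [hpow, cast_add_choose_succ]
  generalize (D : K) / e = m at *
  have hchoose : (m + (k + 1)) / (D + (k + 1)) * ((D + k + 1) * ((D + k).choose k / (k + 1))) =
      m * ((D + k).choose k / (k + 1)) + ((D + k).choose k : K) := by
    field_simp
    ring
  have hcancel := mul_div_cancel₀ ((D + k).choose k - (k + 1) : K) hm_pos.ne'
  push_cast
  rw [hchoose]
  linarith

theorem stmt_17 (d D e : ℕ) (hd : 3 ≤ d) (hD : 3 ≤ D) (he : 1 ≤ e) (heD : e < D)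
    (hdvd : e ∣ D) :
    ((D : ℚ) / e) * (((d : ℚ) - 1) * ((D : ℚ) - 2) + (D : ℚ) / e - 2)
      ≤ (D : ℚ) ^ d / e - (((D : ℚ) / e + d) / ((D : ℚ) + d)) * (Nat.choose (D + d) d : ℚ)
        + d := by
  have h_two_mul : 2 * e ≤ D := by
    have := Nat.le_of_dvd (Nat.sub_pos_of_lt heD) (Nat.dvd_sub hdvd dvd_rfl)
    omega
  exact stmt_17_general d D (e : ℚ) hd (mod_cast he) (mod_cast h_two_mul)
end

section
/- Let d ≥ 3 and D ≥ 3 be integers. Then (d−1)(D−2) + C(D+d−1, d−1) ≤ D^{d−1} + d, where C(n, k) denotes the binomial coefficient n choose k; equivalently, (d−1)(D−2) ≤ D^{d−1} − C(D+d−1, d−1) + d. -/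
/-!
Write `n = d - 1 ≥ 2` and `D = m + 3`. The inequality becomes `C(D + n, n) + n m ≤ D ^ n + 1`, which
follows by induction on `n`: passing from `n` to `n + 1` multiplies the binomial coefficient by
`1 + D / (n + 1) ≤ 1 + D / 3`, but multiplies the power by `D > 1 + D / 3`, and the difference
absorbs the growth of the linear term.
-/

/-- Cleared of denominators: the ratio of the two binomial coefficients is `1 + D / (n + 1)`. -/
theorem add_one_mul_choose_add_one_le {k n : ℕ} (hkn : k ≤ n) (D : ℕ) :
    (k + 1) * (D + n + 1).choose (n + 1) ≤ (D + k + 1) * (D + n).choose n := by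
  have ratio_le : (k + 1) * (D + n + 1) ≤ (D + k + 1) * (n + 1) := by
    linarith [Nat.mul_le_mul_left D hkn]
  refine Nat.le_of_mul_le_mul_right ?_ n.succ_pos
  calc (k + 1) * (D + n + 1).choose (n + 1) * (n + 1)
      = (k + 1) * (D + n + 1) * (D + n).choose n := by
        rw [mul_assoc, ← Nat.add_one_mul_choose_eq, mul_assoc]
    _ ≤ (D + k + 1) * (n + 1) * (D + n).choose n := Nat.mul_le_mul_right _ ratio_le
    _ = (D + k + 1) * (D + n).choose n * (n + 1) := mul_right_comm _ _ _

theorem choose_two_add_two_mul_le_sq_add_one (m : ℕ) :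
    (m + 3 + 2).choose 2 + 2 * m ≤ (m + 3) ^ 2 + 1 := by
  have two_mul_choose_le : 2 * (m + 3 + 2).choose 2 ≤ (m + 5) * (m + 4) := by
    simpa using add_one_mul_choose_add_one_le le_rfl (m + 3) (n := 1)
  linarith [Nat.le_mul_self m]

theorem choose_add_mul_le_pow_add_one {n : ℕ} (hn : 2 ≤ n) (m : ℕ) :
    (m + 3 + n).choose n + n * m ≤ (m + 3) ^ n + 1 := by
  induction n, hn using Nat.le_induction with
  | base => exact choose_two_add_two_mul_le_sq_add_one m
  | succ n hn ih =>
    have choose_le : 3 * (m + 3 + n + 1).choose (n + 1) ≤ (m + 6) * (m + 3 + n).choose n :=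
      add_one_mul_choose_add_one_le hn (m + 3)
    have pow_pos : 1 ≤ (m + 3) ^ n := Nat.one_le_pow _ _ (by lia)
    have linear_le : 4 * m + 3 ≤ (2 * m + 3) * (m + 3) ^ n + n * m * (m + 3) :=
      calc 4 * m + 3 = (2 * m + 3) * 1 + 2 * m * 1 := by ring
        _ ≤ (2 * m + 3) * (m + 3) ^ n + n * m * (m + 3) := by gcongr; lia
    refine Nat.le_of_mul_le_mul_left ?_ three_pos
    calc 3 * ((m + 3 + n + 1).choose (n + 1) + (n + 1) * m)
        ≤ (m + 6) * (m + 3 + n).choose n + 3 * ((n + 1) * m) := by lia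
      _ ≤ 3 * ((m + 3) ^ (n + 1) + 1) := by
        linarith [Nat.mul_le_mul_left (m + 6) ih, pow_succ (m + 3) n]

theorem stmt_18 (d D : ℕ) (hd : 3 ≤ d) (hD : 3 ≤ D) :
    (d - 1) * (D - 2) + Nat.choose (D + d - 1) (d - 1) ≤ D ^ (d - 1) + d := by
  obtain ⟨n, rfl⟩ := Nat.exists_eq_add_of_le' (show 1 ≤ d by lia)
  obtain ⟨m, rfl⟩ := Nat.exists_eq_add_of_le' hD
  calc n * (m + 1) + (m + 3 + n).choose n
      = ((m + 3 + n).choose n + n * m) + n := by ring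
    _ ≤ ((m + 3) ^ n + 1) + n :=
      Nat.add_le_add_right (choose_add_mul_le_pow_add_one (by lia) m) n
    _ = (m + 3) ^ n + (n + 1) := by ring
end
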